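/- Let g be a prefix replacement permutation of the Cantor set C = ℕ → Bool. Then the set of cardinalities of the finite orbits of the cyclic group ⟨g⟩ acting on C is a finite set of positive integers; in particular, the lengths of the finite orbits of g on C are bounded. -/

import Mathlib

/-- The Cantor set `C = ℕ → Bool`. -/
abbrev Cantor : Type := ℕ → Bool

/-- Prepend a finite word `a` to an element `ξ` of the Cantor set. -/
def prepend (a : List Bool) (ξ : Cantor) : Cantor :=
  fun n => if h : n < a.length then a.get ⟨n, h⟩ else ξ (n - a.length)

/-- A finite set of finite binary words is a complete antichain if distinct elements
are incomparable in the prefix order and every `ξ : ℕ → Bool` has an initial segment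
lying in it. -/
def IsCompleteAntichain (A : Set (List Bool)) : Prop :=
  A.Finite ∧
  (∀ a ∈ A, ∀ b ∈ A, a ≠ b → ¬ a <+: b) ∧
  (∀ ξ : Cantor, ∃ n : ℕ, (List.ofFn fun i : Fin n => ξ i) ∈ A)

/-- A permutation of the Cantor set is a prefix replacement map if it is given by
a bijection between two finite complete antichains of prefixes. -/
def IsPrefixReplacement (g : Equiv.Perm Cantor) : Prop :=
  ∃ A B : Set (List Bool), IsCompleteAntichain A ∧ IsCompleteAntichain B ∧
    ∃ σ : A ≃ B, ∀ (a : A) (ξ : Cantor), g (prepend a ξ) = prepend (σ a : List Bool) ξ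

/-!
Near each point `ξ` the permutation `g` replaces a prefix of length at most `L`, changing its
length by an integer `d ξ`. Along a finite orbit of length `k` the total change `D` is, after
replacing `g` by `g⁻¹` if necessary, nonnegative, and then the point `ξ` of the orbit where the
partial sums of `d` attain their minimum has nonnegative partial sums only. Hence no iterate of
`g` ever consumes a letter beyond the first `L` letters of a point `ζ` which agrees with `ξ`
that far: `g ^ (j * k)` replaces the first `L` letters of `ζ` by the first `L + j * D` letters
of `ξ`.

Suppose that `ζ` is periodic too. If `D = 0`, then `g ^ k` fixes `ζ`; if `D > 0`, then letting
`j` run through the multiples of the period of `ζ` shows that `ζ` has arbitrarily long prefixes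
in common with `ξ`, so `ζ = ξ`. In both cases the period of `ζ` divides `k`. By symmetry, the
period of such a point `ξ` depends only on its prefix of length `L`, for which there are
finitely many possibilities.
-/

open Function Stream'

section BirkhoffSum

variable {X M : Type*}

lemma birkhoffSum_mul_of_isPeriodicPt [AddCommMonoid M] {f : X → X} {k : ℕ} {x : X}
    (hx : IsPeriodicPt f k x) (φ : X → M) (n : ℕ) :
    birkhoffSum f φ (n * k) x = n • birkhoffSum f φ k x := by
  induction n with
  | zero => simp
  | succ n ih => rw [Nat.succ_mul, birkhoffSum_add, (hx.const_mul n).eq, ih, succ_nsmul]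

lemma birkhoffSum_symm_iterate [AddCommGroup M] (g : Equiv.Perm X) (φ : X → M) (n : ℕ) (x : X) :
    birkhoffSum g.symm (fun y => -φ (g.symm y)) n (g^[n] x) = -birkhoffSum g φ n x := by
  induction n with
  | zero => simp
  | succ n ih =>
    rw [birkhoffSum_succ', birkhoffSum_succ, iterate_succ_apply', Equiv.symm_apply_apply, ih,
      neg_add_rev]

/-- The periodic points of `f` along whose orbit all partial sums of `φ` are nonnegative. -/
def nonnegBirkhoffPts [AddCommMonoid M] [LE M] (f : X → X) (φ : X → M) : Set X :=
  {x ∈ periodicPts f | ∀ n, 0 ≤ birkhoffSum f φ n x}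

lemma exists_iterate_mem_nonnegBirkhoffPts [AddCommGroup M] [LinearOrder M] [IsOrderedAddMonoid M]
    {f : X → X} {φ : X → M} {k : ℕ} {x : X} (hk : 0 < k) (hx : IsPeriodicPt f k x)
    (hsum : 0 ≤ birkhoffSum f φ k x) : ∃ i, f^[i] x ∈ nonnegBirkhoffPts f φ := by
  obtain ⟨i, -, hi⟩ := (Finset.range k).exists_min_image (birkhoffSum f φ · x)
    ⟨0, Finset.mem_range.2 hk⟩
  have hmin (n : ℕ) : birkhoffSum f φ i x ≤ birkhoffSum f φ n x := calc
    birkhoffSum f φ i x ≤ birkhoffSum f φ (n % k) x := hi _ (Finset.mem_range.2 (n.mod_lt hk))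
    _ ≤ (n / k) • birkhoffSum f φ k x + birkhoffSum f φ (n % k) x :=
      le_add_of_nonneg_left (nsmul_nonneg hsum _)
    _ = birkhoffSum f φ (n / k * k + n % k) x := by
      rw [birkhoffSum_add, birkhoffSum_mul_of_isPeriodicPt hx, (hx.const_mul _).eq]
    _ = birkhoffSum f φ n x := by rw [Nat.div_add_mod']
  refine ⟨i, mk_mem_periodicPts hk (hx.apply_iterate i), fun n => ?_⟩
  simpa [birkhoffSum_add] using hmin (i + n)

end BirkhoffSum

section Orbit

variable {X : Type*}

lemma isPeriodicPt_symm_iff (g : Equiv.Perm X) (n : ℕ) (x : X) :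
    IsPeriodicPt g.symm n x ↔ IsPeriodicPt g n x := by
  simp only [IsPeriodicPt, IsFixedPt, ← Equiv.Perm.coe_inv, Equiv.Perm.iterate_eq_pow, inv_pow,
    Equiv.Perm.inv_eq_iff_eq]
  exact eq_comm

lemma minimalPeriod_symm (g : Equiv.Perm X) (x : X) :
    minimalPeriod g.symm x = minimalPeriod g x :=
  minimalPeriod_eq_minimalPeriod_iff.2 fun n => isPeriodicPt_symm_iff g n x

lemma range_zpow_smul_eq_orbit {G : Type*} [Group G] [MulAction G X] (g : G) (x : X) :
    (Set.range fun n : ℤ => g ^ n • x) = MulAction.orbit (Subgroup.zpowers g) x := by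
  ext y
  simp [MulAction.mem_orbit_iff, Subgroup.exists_zpowers, Subgroup.smul_def]

lemma ncard_range_zpow_smul {G : Type*} [Group G] [MulAction G X] (g : G) (x : X) :
    (Set.range fun n : ℤ => g ^ n • x).ncard = minimalPeriod (g • ·) x := by
  rw [range_zpow_smul_eq_orbit, ← Nat.card_coe_set_eq,
    Nat.card_congr (MulAction.orbitZPowersEquiv g x), Nat.card_zmod]

end Orbit

section LengthCocycle

variable {α : Type*} {f : Stream' α → Stream' α} {g : Equiv.Perm (Stream' α)} {L : ℕ}
  {d : Stream' α → ℤ}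

/-- Around every point, `f` replaces a prefix of length at most `L` by another word of length at
most `L`, and `d` records the change of length, so that the length changes of the iterates of
`f` are the Birkhoff sums of `d`. The tail `t` is named to make the definition symmetric
in `a` and `b`. -/
def IsLengthCocycle (f : Stream' α → Stream' α) (L : ℕ) (d : Stream' α → ℤ) : Prop :=
  ∀ ξ, ∃ (a b : List α) (t : Stream' α), a.length ≤ L ∧ b.length ≤ L ∧ a ++ₛ t = ξ ∧
    (∀ η, f (a ++ₛ η) = b ++ₛ η) ∧ d ξ = b.length - a.length

namespace IsLengthCocycle

lemma symm (h : IsLengthCocycle g L d) : IsLengthCocycle g.symm L fun ξ => -d (g.symm ξ) := by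
  intro ξ
  obtain ⟨a, b, t, ha, hb, hξ, hab, hd⟩ := h (g.symm ξ)
  refine ⟨b, a, t, hb, ha, ?_, fun η => ?_, ?_⟩
  · rw [← hab, hξ, Equiv.apply_symm_apply]
  · rw [← hab, Equiv.symm_apply_apply]
  · simp only [hd, neg_sub]

lemma apply_take_append (h : IsLengthCocycle f L d) (ξ η : Stream' α) {m m' : ℕ} (hm : L ≤ m)
    (hm' : (m' : ℤ) = m + d ξ) : f (ξ.take m ++ₛ η) = (f ξ).take m' ++ₛ η := by
  obtain ⟨a, b, t, ha, -, rfl, hab, hd⟩ := h ξ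
  obtain ⟨l, rfl⟩ := Nat.exists_eq_add_of_le (ha.trans hm)
  obtain rfl : m' = b.length + l := by omega
  rw [hab, ← append_take, ← append_take, append_append_stream, append_append_stream, hab]

lemma iterate_take_append (h : IsLengthCocycle f L d) {ξ : Stream' α}
    (hξ : ∀ n, 0 ≤ birkhoffSum f d n ξ) (n : ℕ) (η : Stream' α) :
    f^[n] (ξ.take L ++ₛ η) = (f^[n] ξ).take (L + (birkhoffSum f d n ξ).toNat) ++ₛ η := by
  induction n with
  | zero => simp
  | succ n ih =>
    rw [iterate_succ_apply', iterate_succ_apply', ih]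
    refine h.apply_take_append _ _ (Nat.le_add_right _ _) ?_
    rw [Nat.cast_add, Nat.cast_add, Int.toNat_of_nonneg (hξ _), Int.toNat_of_nonneg (hξ _),
      birkhoffSum_succ, add_assoc]

lemma isPeriodicPt_of_take_eq (h : IsLengthCocycle f L d) {ξ ζ : Stream' α}
    (hξ : ∀ n, 0 ≤ birkhoffSum f d n ξ) (hζ : ζ ∈ periodicPts f) (hζξ : ζ.take L = ξ.take L)
    {k : ℕ} (hk : IsPeriodicPt f k ξ) : IsPeriodicPt f k ζ := by
  have iterate_period_mul (j : ℕ) : f^[j * k] ζ =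
      ξ.take (L + (j * birkhoffSum f d k ξ).toNat) ++ₛ ζ.drop L := by
    conv_lhs => rw [← append_take_drop L ζ, hζξ]
    rw [h.iterate_take_append hξ, (hk.const_mul j).eq, birkhoffSum_mul_of_isPeriodicPt hk,
      nsmul_eq_mul]
  rcases (hξ k).eq_or_lt with hD | hD
  · have hfix := iterate_period_mul 1
    rwa [← hD, mul_zero, Int.toNat_zero, add_zero, ← hζξ, append_take_drop, one_mul] at hfix
  · obtain ⟨l, hl, hlζ⟩ := hζ
    suffices ζ = ξ by rwa [this]
    refine take_theorem ζ ξ fun n => ?_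
    have hn : n ≤ L + ((n * l : ℕ) * birkhoffSum f d k ξ).toNat := by
      have : (n : ℤ) ≤ (n * l : ℕ) * birkhoffSum f d k ξ := by
        rw [Nat.cast_mul, mul_assoc]
        exact le_mul_of_one_le_right n.cast_nonneg (Order.one_le_iff_pos.2 (by positivity))
      omega
    rw [← ((hlζ.const_mul n).mul_const k).eq, iterate_period_mul,
      take_append_of_le_length _ _ _ (by rwa [length_take]), take_take, min_eq_right hn]

lemma minimalPeriod_eq_of_take_eq (h : IsLengthCocycle f L d) {ξ ζ : Stream' α}
    (hξ : ξ ∈ nonnegBirkhoffPts f d) (hζ : ζ ∈ nonnegBirkhoffPts f d)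
    (hξζ : ξ.take L = ζ.take L) : minimalPeriod f ξ = minimalPeriod f ζ :=
  minimalPeriod_eq_minimalPeriod_iff.2 fun _ =>
    ⟨h.isPeriodicPt_of_take_eq hξ.2 hζ.1 hξζ.symm, h.isPeriodicPt_of_take_eq hζ.2 hξ.1 hξζ⟩

lemma finite_minimalPeriod_image_nonnegBirkhoffPts [Finite α] (h : IsLengthCocycle f L d) :
    (minimalPeriod f '' nonnegBirkhoffPts f d).Finite := by
  have hfactor : ((nonnegBirkhoffPts f d).domRestrict (minimalPeriod f)).FactorsThrough
      ((nonnegBirkhoffPts f d).domRestrict (take L)) :=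
    fun ξ ζ hξζ => h.minimalPeriod_eq_of_take_eq ξ.2 ζ.2 hξζ
  obtain ⟨e, he⟩ := (factorsThrough_iff _).1 hfactor
  rw [← Set.range_domRestrict, he, Set.range_comp]
  refine ((List.finite_length_eq α L).subset ?_).image e
  rintro _ ⟨ξ, rfl⟩
  exact length_take L ξ.1

lemma finite_minimalPeriod_image_periodicPts [Finite α] (h : IsLengthCocycle g L d) :
    (minimalPeriod g '' periodicPts g).Finite := by
  refine (h.finite_minimalPeriod_image_nonnegBirkhoffPts.union
    h.symm.finite_minimalPeriod_image_nonnegBirkhoffPts).subset ?_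
  rintro _ ⟨ξ, hξ, rfl⟩
  have hpos := minimalPeriod_pos_of_mem_periodicPts hξ
  have hper := isPeriodicPt_minimalPeriod g ξ
  have hper' := (isPeriodicPt_symm_iff g _ ξ).2 hper
  rcases le_total 0 (birkhoffSum g d (minimalPeriod g ξ) ξ) with hD | hD
  · obtain ⟨i, hi⟩ := exists_iterate_mem_nonnegBirkhoffPts hpos hper hD
    exact Or.inl ⟨_, hi, minimalPeriod_apply_iterate hξ i⟩
  · have hD' := birkhoffSum_symm_iterate g d (minimalPeriod g ξ) ξ
    rw [hper.eq] at hD'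
    obtain ⟨i, hi⟩ := exists_iterate_mem_nonnegBirkhoffPts hpos hper' (hD' ▸ neg_nonneg.2 hD)
    refine Or.inr ⟨_, hi, ?_⟩
    rw [minimalPeriod_apply_iterate (mk_mem_periodicPts hpos hper'), minimalPeriod_symm]

end IsLengthCocycle

theorem finite_orbit_lengths_finite_general [Finite α] (g : Equiv.Perm (Stream' α))
    (hg : ∃ L d, IsLengthCocycle g L d) :
    {k : ℕ | ∃ ξ : Stream' α, (Set.range fun n : ℤ => (g ^ n) ξ).Finite ∧
      (Set.range fun n : ℤ => (g ^ n) ξ).ncard = k}.Finite ∧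
    ∀ k ∈ {k : ℕ | ∃ ξ : Stream' α, (Set.range fun n : ℤ => (g ^ n) ξ).Finite ∧
      (Set.range fun n : ℤ => (g ^ n) ξ).ncard = k}, 0 < k := by
  have ncard_pos {ξ : Stream' α} (hfin : (Set.range fun n : ℤ => (g ^ n) ξ).Finite) :
      0 < (Set.range fun n : ℤ => (g ^ n) ξ).ncard :=
    (Set.ncard_pos hfin).2 (Set.range_nonempty _)
  obtain ⟨L, d, h⟩ := hg
  constructor
  · refine h.finite_minimalPeriod_image_periodicPts.subset ?_
    rintro _ ⟨ξ, hfin, rfl⟩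
    have hcard : (Set.range fun n : ℤ => (g ^ n) ξ).ncard = minimalPeriod g ξ :=
      ncard_range_zpow_smul g ξ
    exact ⟨ξ, minimalPeriod_pos_iff_mem_periodicPts.1 (hcard ▸ ncard_pos hfin), hcard.symm⟩
  · rintro _ ⟨ξ, hfin, rfl⟩
    exact ncard_pos hfin

end LengthCocycle

lemma prepend_eq_appendStream' : prepend = appendStream' := by
  funext a ξ n
  rcases lt_or_ge n a.length with h | h
  · simp only [prepend, h, ↓reduceDIte, List.get_eq_getElem]
    exact (get_append_left n a ξ h).symm
  · obtain ⟨m, rfl⟩ := Nat.exists_eq_add_of_le h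
    simp only [prepend, h.not_gt, ↓reduceDIte, Nat.add_sub_cancel_left]
    exact (get_append_right m a ξ).symm

lemma ofFn_get_eq_take {α : Type*} (ξ : Stream' α) (n : ℕ) :
    (List.ofFn fun i : Fin n => ξ.get i) = ξ.take n :=
  List.ext_getElem (by simp) fun i _ _ => by simp

lemma IsPrefixReplacement.exists_isLengthCocycle {g : Equiv.Perm Cantor}
    (hg : IsPrefixReplacement g) : ∃ L d, IsLengthCocycle g L d := by
  obtain ⟨A, B, ⟨hA, -, hcover⟩, ⟨hB, -, -⟩, σ, hσ⟩ := hg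
  obtain ⟨L, hL⟩ := ((hA.union hB).image List.length).bddAbove
  choose n hn using hcover
  replace hn (ξ : Stream' Bool) : take (n ξ) ξ ∈ A := ofFn_get_eq_take ξ (n ξ) ▸ hn ξ
  refine ⟨L, fun ξ => (σ ⟨_, hn ξ⟩ : List Bool).length - (take (n ξ) ξ).length, fun ξ =>
    ⟨take (n ξ) ξ, σ ⟨_, hn ξ⟩, drop (n ξ) ξ, ?_, ?_, append_take_drop _ _, fun η => ?_, rfl⟩⟩
  · exact hL ⟨_, Or.inl (hn ξ), rfl⟩
  · exact hL ⟨_, Or.inr (σ _).2, rfl⟩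
  · exact prepend_eq_appendStream' ▸ hσ ⟨_, hn ξ⟩ η

/-- For a prefix replacement permutation `g` of the Cantor set, the set of
cardinalities of the finite orbits of `⟨g⟩` on the Cantor set is a finite set of
positive integers; in particular the lengths of the finite orbits are bounded. -/
theorem finite_orbit_lengths_finite (g : Equiv.Perm Cantor)
    (hg : IsPrefixReplacement g) :
    {k : ℕ | ∃ ξ : Cantor, (Set.range fun n : ℤ => (g ^ n) ξ).Finite ∧
      (Set.range fun n : ℤ => (g ^ n) ξ).ncard = k}.Finite ∧
    ∀ k ∈ {k : ℕ | ∃ ξ : Cantor, (Set.range fun n : ℤ => (g ^ n) ξ).Finite ∧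
      (Set.range fun n : ℤ => (g ^ n) ξ).ncard = k}, 0 < k :=
  finite_orbit_lengths_finite_general g hg.exists_isLengthCocycle
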